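/- arXiv:1812.11280 — 4 statements merged into one kernel-verified Lean document; each statement's English description precedes it below -/
import Mathlib

section
/- Let 2 ≤ z ≤ y be reals and let n be a positive integer such that every prime factor of n is ≥ z, and such that p² ∤ n for every prime p with z ≤ p < y. Then Ω(n) − log n / log y ≤ Σ_{p prime, z ≤ p < y, p | n} (1 − log p / log y). -/
/-!
Writing `Ω(n)` and `log n` as sums over the primes `p ∣ n` weighted by the exponent `v_p(n)`,
the left-hand side becomes `∑_{p ∣ n} v_p(n) (1 - log p / log y)`, and the inequality holds
term by term: for `p < y` the exponent is at most `1` and the weight is nonnegative, while for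
`p ≥ y` the weight is at most `0` and `p` does not occur on the right-hand side.
-/

/-- if every prime factor of `n` is `≥ z` and `n` has no repeated
prime factor in `[z, y)`, then
`Ω(n) - log n / log y ≤ Σ_{z ≤ p < y, p ∣ n} (1 - log p / log y)`. -/
theorem omega_weight_inequality (y z : ℝ) (hz : 2 ≤ z) (hzy : z ≤ y)
    (n : ℕ) (hn : 0 < n)
    (hfac : ∀ p : ℕ, p.Prime → p ∣ n → z ≤ (p : ℝ))
    (hsq : ∀ p : ℕ, p.Prime → z ≤ (p : ℝ) → (p : ℝ) < y → ¬ (p ^ 2 ∣ n)) :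
    (ArithmeticFunction.cardFactors n : ℝ) - Real.log n / Real.log y ≤
      ∑ p ∈ n.primeFactors.filter (fun p : ℕ => z ≤ (p : ℝ) ∧ (p : ℝ) < y),
        (1 - Real.log p / Real.log y) := by
  have hy : 0 < Real.log y := Real.log_pos (by linarith)
  have hlhs : (ArithmeticFunction.cardFactors n : ℝ) - Real.log n / Real.log y =
      ∑ p ∈ n.primeFactors, (n.factorization p : ℝ) * (1 - Real.log p / Real.log y) := by
    rw [ArithmeticFunction.cardFactors_eq_sum_factorization, Real.log_nat_eq_sum_factorization]
    simp only [Finsupp.sum, Nat.support_factorization]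
    rw [Finset.sum_div]
    push_cast
    rw [← Finset.sum_sub_distrib]
    exact Finset.sum_congr rfl fun p _ => by ring
  rw [hlhs, Finset.sum_filter]
  refine Finset.sum_le_sum fun p hp => ?_
  have hpp := Nat.prime_of_mem_primeFactors hp
  have hzp := hfac p hpp (Nat.dvd_of_mem_primeFactors hp)
  have hp0 : (0 : ℝ) < p := by exact_mod_cast hpp.pos
  split_ifs with h
  · have hexp : n.factorization p ≤ 1 := by
      by_contra! h2
      exact hsq p hpp h.1 h.2 ((hpp.pow_dvd_iff_le_factorization hn.ne').2 h2)
    have hw : 0 ≤ 1 - Real.log p / Real.log y :=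
      sub_nonneg.2 ((div_le_one hy).2 (Real.log_le_log hp0 h.2.le))
    exact mul_le_of_le_one_left hw (by exact_mod_cast hexp)
  · have hyp : y ≤ p := not_lt.1 fun hlt => h ⟨hzp, hlt⟩
    have hw : 1 - Real.log p / Real.log y ≤ 0 :=
      sub_nonpos.2 ((one_le_div hy).2 (Real.log_le_log (by linarith) hyp))
    exact mul_nonpos_of_nonneg_of_nonpos (Nat.cast_nonneg _) hw
end

section
/- Let p be a prime with p ∤ H(0), let d be a positive integer with gcd(d, p) = 1, and let x ≥ 1 be real. Then |#{n ∈ ℤ : x < n ≤ 2x, p | H(n), d | n·H(n)} − (ρ₁(p)·ρ₂(d)/(p·d))·x| ≤ ρ₁(p)·ρ₂(d). -/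
/-!
Both divisibility conditions depend only on the residue classes of `n` modulo `p` and modulo `d`.
Since `p ∤ H(0)`, every root of `H` modulo `p` is a unit, so the condition `p ∣ H(n)` selects
exactly the `ρ₁(p)` classes counted by `rho1`. By the Chinese remainder theorem the two conditions
together select `ρ₁(p)·ρ₂(d)` residue classes modulo `p·d`. In an interval `(x, 2x]` a single class
modulo `q` contains `⌊(2x - v)/q⌋ - ⌊(x - v)/q⌋` integers (`card_Ioc_residue`), which differs from
`x/q` by at most `1`; summing over the classes gives the bound.
-/

/-- `ρ₁(d)`, the number of residues `a` mod `d` with `gcd(a,d) = 1` and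
`H(a) ≡ 0 (mod d)`. -/
noncomputable def rho1 (H : Polynomial ℤ) (d : ℕ) : ℕ :=
  Nat.card {a : ZMod d | IsUnit a ∧ Polynomial.aeval a H = 0}

/-- `ρ₂(d)`, the number of residues `a` mod `d` with `a·H(a) ≡ 0 (mod d)`. -/
noncomputable def rho2 (H : Polynomial ℤ) (d : ℕ) : ℕ :=
  Nat.card {a : ZMod d | a * Polynomial.aeval a H = 0}

/-- The integers of `(x, y]` in the class of `v` modulo `q` correspond to the integers of
`((x - v)/q, (y - v)/q]`. -/
lemma card_Ioc_residue (x y : ℝ) (q : ℕ) (hq : 0 < q) (v : ℤ) :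
    ((Finset.Ioc ⌊x⌋ ⌊y⌋).filter (fun n : ℤ => (n : ZMod q) = (v : ZMod q))).card
      = (Finset.Ioc ⌊(x - v) / q⌋ ⌊(y - v) / q⌋).card := by
  have hq' : (0 : ℝ) < q := by exact_mod_cast hq
  symm
  refine Finset.card_bij (fun k _ => v + q * k) ?_ ?_ ?_
  · intro k hk
    simp only [Finset.mem_Ioc, Int.floor_lt, Int.le_floor, div_lt_iff₀ hq', le_div_iff₀ hq',
      Finset.mem_filter] at hk ⊢
    push_cast
    refine ⟨⟨by linarith, by linarith⟩, by simp⟩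
  · intro a _ b _ h
    simpa [hq.ne'] using h
  · intro n hn
    simp only [Finset.mem_Ioc, Int.floor_lt, Int.le_floor, Finset.mem_filter] at hn
    obtain ⟨⟨h1, h2⟩, h3⟩ := hn
    rw [eq_comm, ZMod.intCast_eq_intCast_iff_dvd_sub] at h3
    obtain ⟨k, hk⟩ := h3
    have hn : n = v + q * k := by linarith
    refine ⟨k, ?_, hn.symm⟩
    subst hn
    push_cast at h1 h2
    simp only [Finset.mem_Ioc, Int.floor_lt, Int.le_floor, div_lt_iff₀ hq', le_div_iff₀ hq']
    exact ⟨by linarith, by linarith⟩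

lemma abs_card_Ioc_residue_sub_le (x : ℝ) (hx : 0 ≤ x) (q : ℕ) (hq : 0 < q) (c : ZMod q) :
    |(((Finset.Ioc ⌊x⌋ ⌊2 * x⌋).filter (fun n : ℤ => (n : ZMod q) = c)).card : ℝ) - x / q| ≤ 1 := by
  have hq' : (0 : ℝ) < q := by exact_mod_cast hq
  obtain ⟨v, rfl⟩ := ZMod.intCast_surjective c
  rw [card_Ioc_residue x (2 * x) q hq v, Int.card_Ioc]
  have hle : ⌊(x - v) / q⌋ ≤ ⌊(2 * x - v) / q⌋ := by
    apply Int.floor_le_floor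
    gcongr
    linarith
  have hcast : ((⌊(2 * x - v) / q⌋ - ⌊(x - v) / q⌋).toNat : ℝ)
      = (⌊(2 * x - v) / q⌋ : ℝ) - ⌊(x - v) / q⌋ := by
    have := Int.toNat_of_nonneg (sub_nonneg.mpr hle)
    exact_mod_cast this
  rw [hcast]
  have hdiff : x / q = (2 * x - v) / q - (x - v) / q := by ring
  have h1 := Int.floor_le ((2 * x - v) / q)
  have h2 := Int.lt_floor_add_one ((2 * x - v) / q)
  have h3 := Int.floor_le ((x - v) / q)
  have h4 := Int.lt_floor_add_one ((x - v) / q)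
  rw [abs_le]
  constructor <;> linarith

lemma intCast_dvd_eval_iff (H : Polynomial ℤ) (m : ℕ) (n : ℤ) :
    (m : ℤ) ∣ H.eval n ↔ Polynomial.aeval (n : ZMod m) H = 0 := by
  have h : Polynomial.aeval (n : ZMod m) H = ((H.eval n : ℤ) : ZMod m) := by
    simpa using Polynomial.aeval_algebraMap_apply_eq_algebraMap_eval (A := ZMod m) n H
  rw [h, ZMod.intCast_zmod_eq_zero_iff_dvd]

/-- A root of `H` modulo a prime `p ∤ H(0)` is nonzero, hence a unit. -/
lemma isUnit_of_aeval_eq_zero (H : Polynomial ℤ) (p : ℕ) (hp : p.Prime)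
    (hp0 : ¬ ((p : ℤ) ∣ H.eval 0)) (a : ZMod p) (ha : Polynomial.aeval a H = 0) : IsUnit a := by
  have := Fact.mk hp
  rw [isUnit_iff_ne_zero]
  rintro rfl
  apply hp0
  rw [intCast_dvd_eval_iff]
  simpa using ha

/-- for a prime `p ∤ H(0)`, `d` coprime to `p`, and `x ≥ 1`,
the number of integers `x < n ≤ 2x` with `p ∣ H(n)` and `d ∣ n·H(n)` differs
from `ρ₁(p)·ρ₂(d)·x/(p·d)` by at most `ρ₁(p)·ρ₂(d)`. -/
theorem auxiliary_congruence_count (H : Polynomial ℤ) (p : ℕ) (hp : p.Prime)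
    (hp0 : ¬ ((p : ℤ) ∣ H.eval 0)) (d : ℕ) (hd : 0 < d)
    (hpd : Nat.gcd d p = 1) (x : ℝ) (hx : 1 ≤ x) :
    |(Nat.card {n : ℤ | x < (n : ℝ) ∧ (n : ℝ) ≤ 2 * x ∧
        (p : ℤ) ∣ H.eval n ∧ (d : ℤ) ∣ n * H.eval n} : ℝ)
      - ((rho1 H p : ℝ) * (rho2 H d : ℝ) / ((p : ℝ) * d)) * x|
      ≤ (rho1 H p : ℝ) * (rho2 H d : ℝ) := by
  classical
  have hq : 0 < p * d := Nat.mul_pos hp.pos hd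
  have : NeZero (p * d) := ⟨hq.ne'⟩
  let e := ZMod.chineseRemainder (Nat.Coprime.symm hpd)
  let A : Set (ZMod p) := {a | IsUnit a ∧ Polynomial.aeval a H = 0}
  let B : Set (ZMod d) := {a | a * Polynomial.aeval a H = 0}
  -- the residue classes modulo `p * d` selected by the two divisibility conditions
  let S : Finset (ZMod (p * d)) := Finset.univ.filter (fun c => e c ∈ A ×ˢ B)
  have hS : S.card = rho1 H p * rho2 H d := by
    have h1 : S.card = Nat.card (e ⁻¹' (A ×ˢ B)) := by
      rw [← Nat.card_eq_finsetCard]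
      exact Nat.card_congr (Equiv.subtypeEquivRight fun c => by simp [S])
    rw [h1, Nat.card_preimage_of_injective e.injective (by simp [e.surjective.range_eq])]
    exact (Nat.card_congr (Equiv.Set.prod A B)).trans (Nat.card_prod _ _)
  have hmem : ∀ n : ℤ, (n : ZMod (p * d)) ∈ S ↔
      (p : ℤ) ∣ H.eval n ∧ (d : ℤ) ∣ n * H.eval n := by
    intro n
    have h2 : (d : ℤ) ∣ n * H.eval n ↔ (n : ZMod d) * Polynomial.aeval (n : ZMod d) H = 0 := by
      have h := intCast_dvd_eval_iff (Polynomial.X * H) d n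
      rwa [Polynomial.eval_mul, Polynomial.eval_X, map_mul, Polynomial.aeval_X] at h
    rw [intCast_dvd_eval_iff, h2]
    simp only [S, A, B, Finset.mem_filter, Finset.mem_univ, true_and, map_intCast, Set.mem_prod,
      Set.mem_ofPred_eq, Prod.fst_intCast, Prod.snd_intCast]
    exact ⟨fun h => ⟨h.1.2, h.2⟩,
      fun h => ⟨⟨isUnit_of_aeval_eq_zero H p hp hp0 _ h.1, h.1⟩, h.2⟩⟩
  let T : Finset ℤ := (Finset.Ioc ⌊x⌋ ⌊2 * x⌋).filter (fun n => (n : ZMod (p * d)) ∈ S)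
  have hset : {n : ℤ | x < (n : ℝ) ∧ (n : ℝ) ≤ 2 * x ∧
      (p : ℤ) ∣ H.eval n ∧ (d : ℤ) ∣ n * H.eval n} = (T : Set ℤ) := by
    ext n
    simp only [T, Finset.coe_filter, Finset.mem_Ioc, Int.floor_lt, Int.le_floor, hmem,
      Set.mem_ofPred_eq, and_assoc]
  have hT : T.card = ∑ c ∈ S, ((Finset.Ioc ⌊x⌋ ⌊2 * x⌋).filter
      (fun n : ℤ => (n : ZMod (p * d)) = c)).card := by
    have hmaps : Set.MapsTo (fun n : ℤ => (n : ZMod (p * d))) (T : Set ℤ) S :=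
      fun n hn => (Finset.mem_filter.mp (Finset.mem_coe.mp hn)).2
    rw [Finset.card_eq_sum_card_fiberwise hmaps]
    refine Finset.sum_congr rfl fun c hc => ?_
    congr 1
    ext n
    simp only [T, Finset.mem_filter]
    constructor
    · rintro ⟨⟨h1, _⟩, h2⟩
      exact ⟨h1, h2⟩
    · rintro ⟨h1, rfl⟩
      exact ⟨⟨h1, hc⟩, rfl⟩
  have hcard : (Nat.card (T : Set ℤ)) = T.card := by simp
  rw [hset, hcard, hT, ← Nat.cast_mul (rho1 H p), ← hS]
  have hmain : ((S.card : ℝ) / ((p : ℝ) * d)) * x = ∑ _c ∈ S, x / ((p * d : ℕ) : ℝ) := by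
    rw [Finset.sum_const, nsmul_eq_mul]
    push_cast
    ring
  rw [hmain, Nat.cast_sum, ← Finset.sum_sub_distrib]
  refine (Finset.abs_sum_le_sum_abs _ _).trans ?_
  refine (Finset.sum_le_sum fun c _ =>
    abs_card_Ioc_residue_sub_le x (by linarith) (p * d) hq c).trans ?_
  simp
end

section
/- Assume ρ₁(p) < p − 1 for every prime p. Then e^{γ}·(log z)·∏_{p prime, p < z} (1 − ρ₂(p)/p) / ∏_{p prime, p < z} (1 − ρ₁(p)/(p−1)) → 1 as z → ∞, where γ is the Euler–Mascheroni constant. -/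
namespace MertensThird

open Finset Filter Topology

/-! ### Mertens' first theorem -/

/-- The weight `q(p) = -log (1 - 1/p)` at primes `p`, extended by `0` to all natural numbers. -/
noncomputable def q (n : ℕ) : ℝ := if n.Prime then -Real.log (1 - 1 / (n : ℝ)) else 0

lemma one_div_le_q {p : ℕ} (hp : p.Prime) : 1 / (p : ℝ) ≤ q p := by
  have h2 : (2 : ℝ) ≤ p := by exact_mod_cast hp.two_le
  have h : 1 / (p : ℝ) ≤ 1 / 2 := one_div_le_one_div_of_le (by norm_num) h2
  rw [q, if_pos hp]
  have := Real.log_le_sub_one_of_pos (show 0 < 1 - 1 / (p : ℝ) by linarith)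
  linarith

lemma q_le {p : ℕ} (hp : p.Prime) : q p ≤ 1 / ((p : ℝ) - 1) := by
  have h2 : (2 : ℝ) ≤ p := by exact_mod_cast hp.two_le
  have h : 1 / (p : ℝ) ≤ 1 / 2 := one_div_le_one_div_of_le (by norm_num) h2
  rw [q, if_pos hp]
  have := Real.one_sub_inv_le_log_of_pos (show 0 < 1 - 1 / (p : ℝ) by linarith)
  have e : 1 - (1 - 1 / (p : ℝ))⁻¹ = -(1 / ((p : ℝ) - 1)) := by
    have : (p : ℝ) - 1 ≠ 0 := by linarith
    field_simp
    ring
  linarith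

lemma q_nonneg (n : ℕ) : 0 ≤ q n := by
  by_cases hp : n.Prime
  · exact le_trans (by positivity) (one_div_le_q hp)
  · simp [q, hp]

/-- The factorisation of `N!` in logarithmic form. -/
lemma log_factorial_eq (N : ℕ) :
    Real.log (N.factorial : ℝ) =
      ∑ p ∈ N.primesLE, (N.factorial.factorization p : ℝ) * Real.log p := by
  have hN : N.factorial ≠ 0 := N.factorial_ne_zero
  have hpf : N.factorial.primeFactors = N.primesLE := by
    ext p
    rw [Nat.mem_primeFactors_of_ne_zero hN, Nat.mem_primesLE]
    exact ⟨fun h => ⟨h.1.dvd_factorial.1 h.2, h.1⟩, fun h => ⟨h.2, h.2.dvd_factorial.2 h.1⟩⟩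
  conv_lhs => rw [← Nat.prod_factorization_pow_eq_self hN,
    Nat.prod_factorization_eq_prod_primeFactors, hpf]
  push_cast
  rw [Real.log_prod]
  · simp [Real.log_pow]
  · intro p hp
    have := (Nat.prime_of_mem_primesLE hp).ne_zero
    positivity

/-- The upper bound comes from `v_p(N!) ≥ ⌊N/p⌋`, `log N! ≤ N log N` and Chebyshev's bound for
`θ(N)`. -/
lemma sum_log_div_le {N : ℕ} (hN : 1 ≤ N) :
    ∑ p ∈ N.primesLE, Real.log p / p ≤ Real.log N + Real.log 4 := by
  have hN0 : (0 : ℝ) < N := by exact_mod_cast hN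
  have h1 : Real.log (N.factorial : ℝ) ≤ N * Real.log N := by
    rw [← Real.log_pow]
    exact Real.log_le_log (by exact_mod_cast N.factorial_pos) (by exact_mod_cast N.factorial_le_pow)
  have h2 : ∑ p ∈ N.primesLE, ((N : ℝ) * (Real.log p / p) - Real.log p) ≤
      Real.log (N.factorial : ℝ) := by
    rw [log_factorial_eq]
    refine sum_le_sum fun p hp => ?_
    have hpp := Nat.prime_of_mem_primesLE hp
    have hv : N / p ≤ N.factorial.factorization p := by
      rw [Nat.factorization_factorial hpp (show Nat.log p N < Nat.log p N + 2 by lia)]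
      have := single_le_sum (f := fun i => N / p ^ i) (s := Ico 1 (Nat.log p N + 2))
        (fun i _ => Nat.zero_le _) (show 1 ∈ Ico 1 (Nat.log p N + 2) by simp)
      simpa using this
    have hv' : (N : ℝ) / p - 1 ≤ N.factorial.factorization p := by
      have := Nat.lt_floor_add_one ((N : ℝ) / p)
      rw [Nat.floor_div_eq_div] at this
      have hv2 : ((N / p : ℕ) : ℝ) ≤ N.factorial.factorization p := by exact_mod_cast hv
      linarith
    have hl : 0 ≤ Real.log p := Real.log_natCast_nonneg p
    calc (N : ℝ) * (Real.log p / p) - Real.log p = ((N : ℝ) / p - 1) * Real.log p := by ring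
      _ ≤ _ := mul_le_mul_of_nonneg_right hv' hl
  have h3 := Chebyshev.theta_le_log4_mul_x hN0.le
  rw [Chebyshev.theta_eq_sum_primesLE_log] at h3
  rw [sum_sub_distrib, ← mul_sum] at h2
  have : (N : ℝ) * ∑ p ∈ N.primesLE, Real.log p / p ≤ N * (Real.log N + Real.log 4) := by
    linarith
  exact le_of_mul_le_mul_left this hN0

/-- The lower bound comes from `v_p(N!) ≤ N/(p-1)` and `log N! ≥ N log N - N`. -/
lemma le_sum_log_div {N : ℕ} (hN : 1 ≤ N) :
    Real.log N - 1 ≤ ∑ p ∈ N.primesLE, Real.log p / ((p : ℝ) - 1) := by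
  have hN0 : (0 : ℝ) < N := by exact_mod_cast hN
  have h1 : (N : ℝ) * Real.log N - N ≤ Real.log (N.factorial : ℝ) := by
    have h := Real.pow_div_factorial_le_exp N hN0.le N
    have hf : (0 : ℝ) < N.factorial := by exact_mod_cast N.factorial_pos
    have := Real.log_le_log (by positivity) h
    rw [Real.log_exp, Real.log_div (by positivity) hf.ne', Real.log_pow] at this
    linarith
  have h2 : Real.log (N.factorial : ℝ) ≤
      ∑ p ∈ N.primesLE, (N : ℝ) * (Real.log p / ((p : ℝ) - 1)) := by
    rw [log_factorial_eq]
    refine sum_le_sum fun p hp => ?_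
    have hpp := Nat.prime_of_mem_primesLE hp
    have hp1 : (0 : ℝ) < (p : ℝ) - 1 := by
      have : (2 : ℝ) ≤ p := by exact_mod_cast hpp.two_le
      linarith
    have hv : (p - 1) * N.factorial.factorization p ≤ N := by
      rw [Nat.sub_one_mul_factorization_factorial hpp]
      exact Nat.sub_le _ _
    have hv' : ((p : ℝ) - 1) * N.factorial.factorization p ≤ N := by
      have : (((p - 1) * N.factorial.factorization p : ℕ) : ℝ) ≤ N := by exact_mod_cast hv
      rwa [Nat.cast_mul, Nat.cast_sub hpp.one_lt.le, Nat.cast_one] at this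
    have hl : 0 ≤ Real.log p := Real.log_natCast_nonneg p
    calc (N.factorial.factorization p : ℝ) * Real.log p
        ≤ (N / ((p : ℝ) - 1)) * Real.log p := by
          refine mul_le_mul_of_nonneg_right ?_ hl
          rw [le_div_iff₀ hp1]
          linarith
      _ = _ := by ring
  rw [← mul_sum] at h2
  have : (N : ℝ) * (Real.log N - 1) ≤ N * ∑ p ∈ N.primesLE, Real.log p / ((p : ℝ) - 1) := by
    linarith
  exact le_of_mul_le_mul_left this hN0

/-- Replacing `1/p` by `1/(p-1)` changes the sums of `log p / p` by a bounded amount. -/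
lemma exists_sum_log_div_sub_le : ∃ B : ℝ, ∀ N : ℕ,
    ∑ p ∈ N.primesLE, Real.log p / ((p : ℝ) - 1) ≤ ∑ p ∈ N.primesLE, Real.log p / p + B := by
  have hs : Summable fun n : ℕ => 4 * (n : ℝ) ^ (-(3 / 2) : ℝ) :=
    (Real.summable_nat_rpow.2 (by norm_num)).mul_left 4
  refine ⟨∑' n : ℕ, 4 * (n : ℝ) ^ (-(3 / 2) : ℝ), fun N => ?_⟩
  rw [← sub_le_iff_le_add', ← sum_sub_distrib]
  refine le_trans (sum_le_sum fun p hp => ?_)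
    (hs.sum_le_tsum N.primesLE fun n _ => by positivity)
  have h2 : (2 : ℝ) ≤ p := by exact_mod_cast (Nat.prime_of_mem_primesLE hp).two_le
  have h0 : (0 : ℝ) < p := by linarith
  -- `log p ≤ 2 √p` makes the terms `O(p^(-3/2))`
  have hlog : Real.log p ≤ 2 * (p : ℝ) ^ (1 / 2 : ℝ) := by
    have := Real.log_le_rpow_div h0.le (show (0 : ℝ) < 1 / 2 by norm_num)
    linarith
  have e : (p : ℝ) ^ (-(3 / 2) : ℝ) = (p : ℝ) ^ (1 / 2 : ℝ) / (p : ℝ) ^ 2 := by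
    rw [← Real.rpow_natCast, ← Real.rpow_sub h0]
    norm_num
  have hl : 0 ≤ Real.log p := Real.log_natCast_nonneg p
  have h1 : (p : ℝ) - 1 ≠ 0 := by linarith
  calc Real.log p / ((p : ℝ) - 1) - Real.log p / p
      = Real.log p / (p * ((p : ℝ) - 1)) := by field_simp; ring
    _ ≤ Real.log p / (p ^ 2 / 2) := by
        apply div_le_div_of_nonneg_left hl (by positivity)
        nlinarith
    _ ≤ (2 * (p : ℝ) ^ (1 / 2 : ℝ)) / (p ^ 2 / 2) := by gcongr
    _ = _ := by rw [e]; ring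

/-- Mertens' first theorem, with `q(p)` in place of `1/p`. -/
lemma exists_abs_sum_q_mul_log_sub_log_le : ∃ C : ℝ, ∀ N : ℕ, 1 ≤ N →
    |∑ n ∈ range (N + 1), q n * Real.log n - Real.log N| ≤ C := by
  obtain ⟨B, hB⟩ := exists_sum_log_div_sub_le
  refine ⟨|B| + 1 + Real.log 4, fun N hN => ?_⟩
  have e : ∑ n ∈ range (N + 1), q n * Real.log n = ∑ p ∈ N.primesLE, q p * Real.log p := by
    rw [Nat.primesLE_eq_filter_range, sum_filter]
    refine sum_congr rfl fun n _ => ?_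
    split_ifs with h
    · rfl
    · simp [q, h]
  have h1 : ∑ p ∈ N.primesLE, Real.log p / p ≤ ∑ p ∈ N.primesLE, q p * Real.log p := by
    refine sum_le_sum fun p hp => ?_
    have := mul_le_mul_of_nonneg_right (one_div_le_q (Nat.prime_of_mem_primesLE hp))
      (Real.log_natCast_nonneg p)
    rwa [one_div_mul_eq_div] at this
  have h2 : ∑ p ∈ N.primesLE, q p * Real.log p ≤
      ∑ p ∈ N.primesLE, Real.log p / ((p : ℝ) - 1) := by
    refine sum_le_sum fun p hp => ?_
    have := mul_le_mul_of_nonneg_right (q_le (Nat.prime_of_mem_primesLE hp))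
      (Real.log_natCast_nonneg p)
    rwa [one_div_mul_eq_div] at this
  have h3 := sum_log_div_le hN
  have h4 := le_sum_log_div hN
  have h5 := hB N
  have h6 := le_abs_self B
  have h7 : 0 ≤ Real.log 4 := Real.log_nonneg (by norm_num)
  rw [e, abs_le]
  constructor <;> linarith

/-! ### Mertens' second theorem up to a constant -/

/-- The partial sums of `q(n) log n - 1/n` are bounded. -/
lemma exists_abs_sum_sub_le : ∃ C : ℝ, ∀ N : ℕ,
    |∑ n ∈ range N, (q n * Real.log n - 1 / (n : ℝ))| ≤ C := by
  obtain ⟨C, hC⟩ := exists_abs_sum_q_mul_log_sub_log_le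
  have hC0 : 0 ≤ C := le_trans (abs_nonneg _) (hC 1 le_rfl)
  refine ⟨C + 1, fun N => ?_⟩
  rcases lt_or_ge N 2 with hN | hN
  · have : ∑ n ∈ range N, (q n * Real.log n - 1 / (n : ℝ)) = 0 := by
      interval_cases N <;> simp
    rw [this, abs_zero]
    linarith
  obtain ⟨M, rfl⟩ : ∃ M, N = M + 1 := ⟨N - 1, by lia⟩
  have hM : 1 ≤ M := by lia
  have hH : ∑ n ∈ range (M + 1), 1 / (n : ℝ) = (harmonic M : ℝ) := by
    rw [sum_range_succ', harmonic]
    push_cast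
    simp
  have h1 := hC M hM
  have h2 := harmonic_floor_le_one_add_log (M : ℝ) (by exact_mod_cast hM)
  have h3 := log_le_harmonic_floor (M : ℝ) (by positivity)
  rw [Nat.floor_natCast] at h2 h3
  rw [sum_sub_distrib, hH]
  rw [abs_le] at h1 ⊢
  constructor <;> linarith

/-- `∑ (q(n) - 1/(n log n))` converges, by Dirichlet's test with the weights `1/log n`. -/
lemma exists_tendsto_sum_q_sub : ∃ l : ℝ, Tendsto
    (fun N : ℕ => ∑ i ∈ range N,
      (q (i + 2) - 1 / (((i + 2 : ℕ) : ℝ) * Real.log ((i + 2 : ℕ) : ℝ)))) atTop (𝓝 l) := by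
  obtain ⟨C, hC⟩ := exists_abs_sum_sub_le
  have hlog : ∀ i : ℕ, 0 < Real.log ((i + 2 : ℕ) : ℝ) := fun i =>
    Real.log_pos (by push_cast; linarith [(Nat.cast_nonneg i : (0 : ℝ) ≤ i)])
  have hanti : Antitone fun i : ℕ => 1 / Real.log ((i + 2 : ℕ) : ℝ) := by
    intro i j hij
    refine one_div_le_one_div_of_le (hlog i) (Real.log_le_log (by positivity) ?_)
    exact_mod_cast Nat.add_le_add_right hij 2
  have hzero : Tendsto (fun i : ℕ => 1 / Real.log ((i + 2 : ℕ) : ℝ)) atTop (𝓝 0) := by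
    simp only [one_div]
    exact (Real.tendsto_log_atTop.comp
      (tendsto_natCast_atTop_atTop.comp (tendsto_add_atTop_nat 2))).inv_tendsto_atTop
  have hb : ∀ N : ℕ, ‖∑ i ∈ range N, (q (i + 2) * Real.log ((i + 2 : ℕ) : ℝ)
      - 1 / ((i + 2 : ℕ) : ℝ))‖ ≤ C + 1 := by
    intro N
    have h := hC (N + 2)
    rw [sum_range_succ', sum_range_succ'] at h
    simp only [q, zero_add, Nat.not_prime_zero, Nat.not_prime_one, if_false, Nat.cast_zero,
      Nat.cast_one, zero_mul, div_zero, zero_sub] at h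
    rw [Real.norm_eq_abs]
    simp only [q]
    rw [abs_le] at h ⊢
    constructor <;> linarith
  obtain ⟨l, hl⟩ := cauchySeq_tendsto_of_complete
    (hanti.cauchySeq_series_mul_of_tendsto_zero_of_bounded hzero hb)
  refine ⟨l, hl.congr fun N => sum_congr rfl fun i _ => ?_⟩
  have := (hlog i).ne'
  rw [smul_eq_mul]
  field_simp

/-- The integral-test bounds for `1/(x log x)`, whose primitive is `log log x`. -/
lemma loglog_sub_le {x : ℝ} (hx : 2 ≤ x) :
    Real.log (Real.log (x + 1)) - Real.log (Real.log x) ≤ 1 / (x * Real.log x) ∧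
    1 / ((x + 1) * Real.log (x + 1)) ≤ Real.log (Real.log (x + 1)) - Real.log (Real.log x) := by
  have h0 : 0 < Real.log x := Real.log_pos (by linarith)
  have h1 : 0 < Real.log (x + 1) := Real.log_pos (by linarith)
  have a1 : Real.log (x + 1) - Real.log x ≤ 1 / x := by
    rw [← Real.log_div (by linarith) (by linarith)]
    refine (Real.log_le_sub_one_of_pos (by positivity)).trans (le_of_eq ?_)
    field_simp
    ring
  have a2 : 1 / (x + 1) ≤ Real.log (x + 1) - Real.log x := by
    rw [← Real.log_div (by linarith) (by linarith)]
    refine le_trans (le_of_eq ?_) (Real.one_sub_inv_le_log_of_pos (by positivity))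
    field_simp
    ring
  rw [← Real.log_div h1.ne' h0.ne']
  constructor
  · refine (Real.log_le_sub_one_of_pos (by positivity)).trans ?_
    rw [div_sub_one h0.ne', ← div_div]
    gcongr
  · refine le_trans ?_ (Real.one_sub_inv_le_log_of_pos (by positivity))
    rw [inv_div, one_sub_div h1.ne', ← div_div]
    gcongr

/-- `∑ 1/(n log n) - log log N` converges: it is monotone and bounded. -/
lemma exists_tendsto_sum_one_div_mul_log_sub : ∃ l : ℝ, Tendsto
    (fun N : ℕ => ∑ i ∈ range N, 1 / (((i + 2 : ℕ) : ℝ) * Real.log ((i + 2 : ℕ) : ℝ))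
      - Real.log (Real.log ((N + 2 : ℕ) : ℝ))) atTop (𝓝 l) := by
  set E : ℕ → ℝ := fun N => ∑ i ∈ range N, 1 / (((i + 2 : ℕ) : ℝ) * Real.log ((i + 2 : ℕ) : ℝ))
      - Real.log (Real.log ((N + 2 : ℕ) : ℝ)) with hE
  have key : ∀ N : ℕ, _ := fun N : ℕ => loglog_sub_le (x := ((N + 2 : ℕ) : ℝ))
    (by push_cast; linarith [(Nat.cast_nonneg N : (0 : ℝ) ≤ N)])
  have cast1 : ∀ N : ℕ, ((N + 1 + 2 : ℕ) : ℝ) = ((N + 2 : ℕ) : ℝ) + 1 := fun N => by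
    push_cast; ring
  have hmono : Monotone E := by
    refine monotone_nat_of_le_succ fun N => ?_
    have := (key N).1
    simp only [hE, sum_range_succ, cast1]
    linarith
  -- `E N + 1/((N+2) log (N+2))` is antitone, which bounds `E` above by its value at `0`
  have hanti : Antitone fun N : ℕ => E N + 1 / (((N + 2 : ℕ) : ℝ) * Real.log ((N + 2 : ℕ) : ℝ)) := by
    refine antitone_nat_of_succ_le fun N => ?_
    have := (key N).2
    simp only [hE, sum_range_succ, cast1]
    linarith
  refine ⟨_, tendsto_atTop_ciSup hmono
    ⟨E 0 + 1 / (((0 + 2 : ℕ) : ℝ) * Real.log ((0 + 2 : ℕ) : ℝ)), ?_⟩⟩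
  rintro _ ⟨N, rfl⟩
  refine le_trans ?_ (hanti (Nat.zero_le N))
  have : 0 ≤ Real.log ((N + 2 : ℕ) : ℝ) := Real.log_natCast_nonneg _
  have : 0 ≤ 1 / (((N + 2 : ℕ) : ℝ) * Real.log ((N + 2 : ℕ) : ℝ)) := by positivity
  linarith

/-- Mertens' second theorem, with an unidentified constant. -/
lemma exists_tendsto_sum_q_sub_loglog : ∃ l : ℝ, Tendsto
    (fun N : ℕ => ∑ n ∈ range N, q n - Real.log (Real.log N)) atTop (𝓝 l) := by
  obtain ⟨l₁, h₁⟩ := exists_tendsto_sum_q_sub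
  obtain ⟨l₂, h₂⟩ := exists_tendsto_sum_one_div_mul_log_sub
  refine ⟨l₁ + l₂, (tendsto_add_atTop_iff_nat 2).1 ((h₁.add h₂).congr fun N => ?_)⟩
  rw [sum_sub_distrib, sum_range_succ' _ (N + 1), sum_range_succ' _ N]
  have q0 : q 0 = 0 := by simp [q]
  have q1 : q 1 = 0 := by simp [q]
  simp [q0, q1, add_assoc]

lemma tendsto_loglog_ceil_sub :
    Tendsto (fun z : ℝ => Real.log (Real.log (⌈z⌉₊ : ℝ)) - Real.log (Real.log z)) atTop (𝓝 0) := by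
  have h1 : Tendsto (fun z : ℝ => Real.log ((⌈z⌉₊ : ℝ) / z)) atTop (𝓝 0) := by
    simpa using (tendsto_nat_ceil_div_atTop (R := ℝ)).log one_ne_zero
  have h2 : Tendsto (fun z : ℝ => Real.log ((⌈z⌉₊ : ℝ) / z) / Real.log z) atTop (𝓝 0) :=
    h1.div_atTop Real.tendsto_log_atTop
  have h3 : Tendsto (fun z : ℝ => Real.log (1 + Real.log ((⌈z⌉₊ : ℝ) / z) / Real.log z))
      atTop (𝓝 0) := by
    simpa using (h2.const_add 1).log (by norm_num)
  refine h3.congr' ?_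
  filter_upwards [eventually_gt_atTop 1] with z hz
  have hl : 0 < Real.log z := Real.log_pos hz
  have hc : (1 : ℝ) < ⌈z⌉₊ := hz.trans_le (Nat.le_ceil z)
  have hlc : 0 < Real.log (⌈z⌉₊ : ℝ) := Real.log_pos hc
  rw [← Real.log_div hlc.ne' hl.ne', Real.log_div (by linarith) (by linarith)]
  congr 1
  field_simp
  ring

/-- Passage from integer to real cut-off points. -/
lemma tendsto_sum_ceil {l : ℝ} (h : Tendsto
    (fun N : ℕ => ∑ n ∈ range N, q n - Real.log (Real.log N)) atTop (𝓝 l)) :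
    Tendsto (fun z : ℝ => ∑ n ∈ range ⌈z⌉₊, q n - Real.log (Real.log z)) atTop (𝓝 l) := by
  have := (h.comp tendsto_nat_ceil_atTop).add tendsto_loglog_ceil_sub
  rw [add_zero] at this
  refine this.congr fun z => ?_
  simp only [Function.comp]
  ring

/-! ### The Dirichlet series near its singularity -/

/-- The Euler product of `ζ(1+s)`, in logarithmic form. -/
lemma hasSum_log_euler {s : ℝ} (hs : 0 < s) :
    HasSum (fun n : ℕ => if n.Prime then -Real.log (1 - (n : ℝ) ^ (-(1 + s))) else 0)
      (Real.log (∑' n : ℕ, 1 / (n : ℝ) ^ (1 + s))) := by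
  let f : ℕ →*₀ ℝ :=
    { toFun := fun n => (n : ℝ) ^ (-(1 + s))
      map_zero' := by simpa using Real.zero_rpow (by linarith)
      map_one' := by simp
      map_mul' := fun m n => by
        push_cast
        exact Real.mul_rpow (Nat.cast_nonneg m) (Nat.cast_nonneg n) }
  have hf : ∀ n : ℕ, f n = (n : ℝ) ^ (-(1 + s)) := fun n => rfl
  have hsum : Summable fun n : ℕ => f n := Real.summable_nat_rpow.2 (by linarith)
  have hnn : ∀ n : ℕ, 0 ≤ f n := fun n => by rw [hf]; positivity
  have hprod := EulerProduct.eulerProduct_completely_multiplicative_hasProd (f := f)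
    (by simpa only [Real.norm_of_nonneg (hnn _)] using hsum)
  have hpos : 0 < ∑' n, f n := hsum.tsum_pos hnn 1 (by simp)
  have hlt : ∀ p : Nat.Primes, 0 < 1 - f p := fun p => by
    have : f p < 1 := by
      rw [hf]
      exact Real.rpow_lt_one_of_one_lt_of_neg (by exact_mod_cast p.2.one_lt) (by linarith)
    linarith
  have hlog : HasSum (fun p : Nat.Primes => -Real.log (1 - f p)) (Real.log (∑' n, f n)) := by
    have h : Tendsto (fun t : Finset Nat.Primes => Real.log (∏ p ∈ t, (1 - f p)⁻¹)) atTop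
        (𝓝 (Real.log (∑' n, f n))) := Tendsto.log hprod hpos.ne'
    refine Tendsto.congr (fun t => ?_) h
    rw [Real.log_prod fun p _ => (inv_pos.2 (hlt p)).ne']
    simp [Real.log_inv]
  have e : ∑' n, f n = ∑' n : ℕ, 1 / (n : ℝ) ^ (1 + s) :=
    tsum_congr fun n => by rw [hf, Real.rpow_neg (Nat.cast_nonneg n), one_div]
  rw [e] at hlog
  have := hasSum_subtype_iff_indicator (s := {n : ℕ | n.Prime})
    (f := fun n : ℕ => -Real.log (1 - f n)) |>.1 hlog
  convert this using 1
  funext n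
  simp only [Set.indicator_apply, Set.mem_ofPred_eq, hf]

/-- Comparison of the two Dirichlet series at a single prime: with `x = p^(-s)` and `y = 1/p`. -/
lemma abs_log_sub_le {x y : ℝ} (hx0 : 0 < x) (hx1 : x ≤ 1) (hy0 : 0 < y) (hy : y ≤ 1 / 2) :
    |(-Real.log (1 - y)) * x - -Real.log (1 - y * x)| ≤ 2 * y ^ 2 := by
  have hyx : y * x ≤ y := mul_le_of_le_one_right hy0.le hx1
  have bounds : ∀ u : ℝ, 0 ≤ u → u ≤ 1 / 2 →
      u ≤ -Real.log (1 - u) ∧ -Real.log (1 - u) ≤ u + 2 * u ^ 2 := by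
    intro u hu0 hu
    have h1 := Real.log_le_sub_one_of_pos (show 0 < 1 - u by linarith)
    have h2 := Real.one_sub_inv_le_log_of_pos (show 0 < 1 - u by linarith)
    have h3 : (1 - u)⁻¹ ≤ 1 + u + 2 * u ^ 2 := by
      rw [inv_le_iff_one_le_mul₀ (by linarith)]
      nlinarith [mul_nonneg hu0 hu0, mul_nonneg (mul_nonneg hu0 hu0) (sub_nonneg.2 hu)]
    constructor <;> linarith
  obtain ⟨a1, a2⟩ := bounds y hy0.le hy
  obtain ⟨b1, b2⟩ := bounds (y * x) (by positivity) (hyx.trans hy)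
  have c1 := mul_le_mul_of_nonneg_right a1 hx0.le
  have c2 := mul_le_mul_of_nonneg_right a2 hx0.le
  have hsq : (y * x) ^ 2 ≤ y ^ 2 := by gcongr
  have hsq2 : y ^ 2 * x ≤ y ^ 2 := mul_le_of_le_one_right (by positivity) hx1
  rw [abs_le]
  constructor <;> nlinarith

/-- The difference between the terms of `∑ q(p) p^(-s)` and of `log ζ(1+s)`. -/
noncomputable def eulerDiff (s : ℝ) (n : ℕ) : ℝ :=
  q n * (n : ℝ) ^ (-s) - if n.Prime then -Real.log (1 - (n : ℝ) ^ (-(1 + s))) else 0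

lemma abs_eulerDiff_le {s : ℝ} (hs : 0 < s) (n : ℕ) :
    |eulerDiff s n| ≤ 2 * (n : ℝ) ^ (-2 : ℝ) := by
  by_cases hp : n.Prime
  · have h2 : (2 : ℝ) ≤ n := by exact_mod_cast hp.two_le
    have h0 : (0 : ℝ) < n := by linarith
    have h := abs_log_sub_le (x := (n : ℝ) ^ (-s)) (y := 1 / (n : ℝ)) (by positivity)
      (Real.rpow_le_one_of_one_le_of_nonpos (by linarith) (by linarith)) (by positivity)
      (one_div_le_one_div_of_le (by norm_num) h2)
    have e : (n : ℝ) ^ (-(1 + s)) = 1 / n * (n : ℝ) ^ (-s) := by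
      rw [neg_add, Real.rpow_add h0, Real.rpow_neg_one, one_div]
    have e2 : (n : ℝ) ^ (-2 : ℝ) = (1 / (n : ℝ)) ^ 2 := by
      rw [Real.rpow_neg h0.le, one_div, inv_pow]
      norm_cast
    rw [eulerDiff, q, if_pos hp, if_pos hp, e, e2]
    exact h
  · simp only [eulerDiff, q, if_neg hp, zero_mul, sub_zero, abs_zero]
    positivity

lemma summable_bound : Summable fun n : ℕ => 2 * (n : ℝ) ^ (-2 : ℝ) :=
  (Real.summable_nat_rpow.2 (by norm_num)).mul_left 2

lemma summable_q_mul_rpow {s : ℝ} (hs : 0 < s) : Summable fun n : ℕ => q n * (n : ℝ) ^ (-s) := by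
  have h1 : Summable (eulerDiff s) :=
    Summable.of_norm_bounded summable_bound fun n => abs_eulerDiff_le hs n
  refine (h1.add (hasSum_log_euler hs).summable).congr fun n => ?_
  simp [eulerDiff]

/-- `∑ q(p) p^(-s) = log ζ(1+s) + o(1) = -log s + o(1)` as `s → 0+`. -/
lemma tendsto_tsum_q_add_log :
    Tendsto (fun s : ℝ => ∑' n : ℕ, q n * (n : ℝ) ^ (-s) + Real.log s) (𝓝[>] 0) (𝓝 0) := by
  have hzeta : Tendsto (fun s : ℝ => Real.log (s * ∑' n : ℕ, 1 / (n : ℝ) ^ (1 + s)))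
      (𝓝[>] 0) (𝓝 0) := by
    have hshift : Tendsto (fun s : ℝ => 1 + s) (𝓝[>] 0) (𝓝[>] 1) := by
      refine tendsto_nhdsWithin_of_tendsto_nhds_of_eventually_within _ ?_ ?_
      · have : Tendsto (fun s : ℝ => 1 + s) (𝓝 0) (𝓝 (1 + 0)) := tendsto_id.const_add 1
        rw [add_zero] at this
        exact this.mono_left nhdsWithin_le_nhds
      · filter_upwards [self_mem_nhdsWithin] with s hs
        simpa using hs
    have := (tendsto_sub_mul_tsum_nat_rpow.comp hshift).log one_ne_zero
    simpa [Function.comp_def] using this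
  have hdiff : Tendsto (fun s : ℝ => ∑' n : ℕ, eulerDiff s n) (𝓝[>] 0) (𝓝 0) := by
    have h := tendsto_tsum_of_dominated_convergence (𝓕 := 𝓝[>] (0 : ℝ)) (f := eulerDiff)
      (g := fun _ => 0) summable_bound ?_ ?_
    · simpa using h
    · intro n
      by_cases hp : n.Prime
      · have h2 : (2 : ℝ) ≤ n := by exact_mod_cast hp.two_le
        have h0 : (0 : ℝ) < n := by linarith
        have hc1 : ContinuousAt (fun s : ℝ => (n : ℝ) ^ (-s)) 0 :=
          (Real.continuousAt_const_rpow h0.ne').comp continuousAt_neg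
        have hc2 : ContinuousAt (fun s : ℝ => (n : ℝ) ^ (-(1 + s))) 0 :=
          ContinuousAt.comp (f := fun s : ℝ => -(1 + s)) (Real.continuousAt_const_rpow h0.ne')
            (by fun_prop)
        have hne : 1 - (n : ℝ) ^ (-(1 + (0 : ℝ))) ≠ 0 := by
          have := Real.rpow_lt_one_of_one_lt_of_neg (x := (n : ℝ)) (z := -(1 + (0 : ℝ)))
            (by linarith) (by norm_num)
          linarith
        have hc : ContinuousAt (fun s : ℝ => eulerDiff s n) 0 := by
          simp only [eulerDiff, if_pos hp]
          exact (hc1.const_mul _).sub ((continuousAt_const.sub hc2).log hne).neg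
        have h0' : eulerDiff 0 n = 0 := by
          simp [eulerDiff, q, hp, Real.rpow_neg_one]
        have := hc.tendsto
        rw [h0'] at this
        exact this.mono_left nhdsWithin_le_nhds
      · simp [eulerDiff, q, hp]
    · filter_upwards [self_mem_nhdsWithin] with s hs n
      exact abs_eulerDiff_le hs n
  have := hdiff.add hzeta
  rw [add_zero] at this
  refine this.congr' ?_
  filter_upwards [self_mem_nhdsWithin] with s hs
  have hs0 : (0 : ℝ) < s := hs
  have hz : HasSum _ _ := hasSum_log_euler hs0
  have hzpos : (0 : ℝ) < ∑' n : ℕ, 1 / (n : ℝ) ^ (1 + s) := by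
    have hsum : Summable fun n : ℕ => 1 / (n : ℝ) ^ (1 + s) :=
      Real.summable_one_div_nat_rpow.2 (by linarith)
    exact hsum.tsum_pos (fun n => by positivity) 1 (by simp)
  have e : ∑' n : ℕ, eulerDiff s n = ∑' n : ℕ, q n * (n : ℝ) ^ (-s) -
      Real.log (∑' n : ℕ, 1 / (n : ℝ) ^ (1 + s)) := by
    rw [← hz.tsum_eq, ← (summable_q_mul_rpow hs0).tsum_sub hz.summable]
    rfl
  rw [e, Real.log_mul hs0.ne' hzpos.ne']
  ring

/-! ### Identification of the constant -/

/-- The total weight of the positive integers `n` with `⌊log n⌋ = k`. -/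
noncomputable def block (k : ℕ) : ℝ :=
  ∑ n ∈ Ico ⌈Real.exp k⌉₊ ⌈Real.exp (k + 1 : ℕ)⌉₊, q n

lemma sum_block (m : ℕ) : ∑ k ∈ range m, block k = ∑ n ∈ range ⌈Real.exp m⌉₊, q n := by
  have h : ∀ k : ℕ, block k = ∑ n ∈ range ⌈Real.exp (k + 1 : ℕ)⌉₊, q n -
      ∑ n ∈ range ⌈Real.exp k⌉₊, q n := fun k =>
    sum_Ico_eq_sub _ (Nat.ceil_mono (Real.exp_le_exp.2 (by exact_mod_cast Nat.le_succ k)))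
  simp_rw [h]
  rw [sum_range_sub (fun k : ℕ => ∑ n ∈ range ⌈Real.exp k⌉₊, q n)]
  simp [q]

/-- With `x = e^(-s)`, the weight `x^⌊log n⌋` agrees with `n^(-s)` up to a factor in `[1, e^s]`. -/
lemma pow_floor_log_bounds {s : ℝ} (hs : 0 < s) {n : ℕ} (hn : n ≠ 0) :
    (n : ℝ) ^ (-s) ≤ Real.exp (-s) ^ ⌊Real.log n⌋₊ ∧
      Real.exp (-s) ^ ⌊Real.log n⌋₊ ≤ Real.exp s * (n : ℝ) ^ (-s) := by
  have h0 : (0 : ℝ) < n := by exact_mod_cast Nat.pos_of_ne_zero hn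
  have h1 := Nat.floor_le (Real.log_natCast_nonneg n)
  have h2 := Nat.lt_floor_add_one (Real.log n)
  rw [← Real.exp_nat_mul, Real.rpow_def_of_pos h0, ← Real.exp_add, Real.exp_le_exp,
    Real.exp_le_exp]
  constructor <;> nlinarith

lemma summable_q_mul_pow {s : ℝ} (hs : 0 < s) :
    Summable fun n : ℕ => q n * Real.exp (-s) ^ ⌊Real.log n⌋₊ := by
  refine Summable.of_nonneg_of_le (fun n => mul_nonneg (q_nonneg n) (by positivity)) (fun n => ?_)
    ((summable_q_mul_rpow hs).mul_left (Real.exp s))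
  rcases eq_or_ne n 0 with rfl | hn
  · simp [q]
  · have := mul_le_mul_of_nonneg_left (pow_floor_log_bounds hs hn).2 (q_nonneg n)
    linarith

lemma hasSum_block {s : ℝ} (hs : 0 < s) :
    HasSum (fun k => block k * Real.exp (-s) ^ k)
      (∑' n : ℕ, q n * Real.exp (-s) ^ ⌊Real.log n⌋₊) := by
  have h := (summable_q_mul_pow hs).hasSum.tsum_fiberwise (fun n : ℕ => ⌊Real.log n⌋₊)
  suffices e : (fun k => block k * Real.exp (-s) ^ k) = fun k : ℕ =>
      ∑' n : (fun n : ℕ => ⌊Real.log n⌋₊) ⁻¹' {k}, q n * Real.exp (-s) ^ ⌊Real.log n⌋₊ by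
    rw [e]
    exact h
  funext k
  rw [tsum_subtype ((fun n : ℕ => ⌊Real.log n⌋₊) ⁻¹' {k})
    (fun n : ℕ => q n * Real.exp (-s) ^ ⌊Real.log n⌋₊)]
  have hmem : ∀ n : ℕ, n ≠ 0 →
      (n ∈ Ico ⌈Real.exp k⌉₊ ⌈Real.exp (k + 1 : ℕ)⌉₊ ↔ ⌊Real.log n⌋₊ = k) := by
    intro n hn
    have h0 : (0 : ℝ) < n := by exact_mod_cast Nat.pos_of_ne_zero hn
    rw [mem_Ico, Nat.ceil_le, Nat.lt_ceil, ← Real.le_log_iff_exp_le h0,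
      ← Real.log_lt_iff_lt_exp h0, Nat.floor_eq_iff (Real.log_natCast_nonneg n)]
    push_cast
    rfl
  rw [tsum_eq_sum (s := Ico ⌈Real.exp k⌉₊ ⌈Real.exp (k + 1 : ℕ)⌉₊), block, sum_mul]
  · refine sum_congr rfl fun n hn => ?_
    have hn0 : n ≠ 0 := by
      rintro rfl
      have := (mem_Ico.1 hn).1
      rw [Nat.ceil_le] at this
      exact absurd this (by simpa using Real.exp_pos k)
    have hk := (hmem n hn0).1 hn
    rw [Set.indicator_of_mem (by simpa using hk), hk]
  · intro n hn
    rcases eq_or_ne n 0 with rfl | hn0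
    · simp [q]
    · rw [Set.indicator_of_notMem]
      intro hk
      exact hn ((hmem n hn0).2 (by simpa using hk))

/-- `(1 - e^(-s)) / s → 1`, in logarithmic form. -/
lemma tendsto_log_one_sub_exp_sub_log :
    Tendsto (fun s : ℝ => Real.log (1 - Real.exp (-s)) - Real.log s) (𝓝[>] 0) (𝓝 0) := by
  have hd : HasDerivAt (fun s : ℝ => 1 - Real.exp (-s)) 1 0 := by
    have := ((hasDerivAt_neg (0 : ℝ)).exp).const_sub 1
    simpa using this
  have h1 := hd.tendsto_slope_zero_right
  have h2 := h1.log one_ne_zero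
  rw [Real.log_one] at h2
  refine h2.congr' ?_
  filter_upwards [self_mem_nhdsWithin] with s hs
  have hs0 : (0 : ℝ) < s := hs
  have : 0 < 1 - Real.exp (-s) := by
    have := Real.exp_lt_one_iff.2 (show -s < 0 by linarith)
    linarith
  simp only [zero_add, neg_zero, Real.exp_zero, sub_self, sub_zero, smul_eq_mul]
  rw [Real.log_mul (inv_pos.2 hs0).ne' this.ne', Real.log_inv]
  ring

/-- Replacing `n^(-s)` by `x^(⌊log n⌋ + 1)`, where `x = e^(-s)`, is harmless as `s → 0+`. -/
lemma tendsto_exp_mul_tsum_sub :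
    Tendsto (fun s : ℝ => Real.exp (-s) * ∑' n : ℕ, q n * Real.exp (-s) ^ ⌊Real.log n⌋₊ -
      ∑' n : ℕ, q n * (n : ℝ) ^ (-s)) (𝓝[>] 0) (𝓝 0) := by
  have hsQ : Tendsto (fun s : ℝ => -(s * ∑' n : ℕ, q n * (n : ℝ) ^ (-s))) (𝓝[>] 0) (𝓝 0) := by
    have hid : Tendsto (fun s : ℝ => s) (𝓝[>] 0) (𝓝 0) := nhdsWithin_le_nhds
    have h1 := (hid.mul tendsto_tsum_q_add_log).neg
    have h2 : Tendsto (fun s : ℝ => Real.log s * s) (𝓝[>] 0) (𝓝 0) := by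
      simpa using tendsto_log_mul_rpow_nhdsGT_zero one_pos
    have := h1.add h2
    simp only [mul_zero, neg_zero, add_zero] at this
    refine this.congr fun s => ?_
    ring
  refine tendsto_of_tendsto_of_tendsto_of_le_of_le' hsQ tendsto_const_nhds ?_ ?_
  · filter_upwards [self_mem_nhdsWithin] with s hs
    have hle : ∑' n : ℕ, q n * (n : ℝ) ^ (-s) ≤
        ∑' n : ℕ, q n * Real.exp (-s) ^ ⌊Real.log n⌋₊ := by
      refine (summable_q_mul_rpow hs).tsum_le_tsum (fun n => ?_) (summable_q_mul_pow hs)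
      rcases eq_or_ne n 0 with rfl | hn
      · simp [q]
      · exact mul_le_mul_of_nonneg_left (pow_floor_log_bounds hs hn).1 (q_nonneg n)
    have h0 : 0 ≤ ∑' n : ℕ, q n * (n : ℝ) ^ (-s) :=
      tsum_nonneg fun n => mul_nonneg (q_nonneg n) (by positivity)
    have h1 := Real.add_one_le_exp (-s)
    have h2 := mul_le_mul_of_nonneg_left hle (Real.exp_pos (-s)).le
    nlinarith
  · filter_upwards [self_mem_nhdsWithin] with s hs
    have hle : ∑' n : ℕ, q n * Real.exp (-s) ^ ⌊Real.log n⌋₊ ≤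
        Real.exp s * ∑' n : ℕ, q n * (n : ℝ) ^ (-s) := by
      rw [← tsum_mul_left]
      refine (summable_q_mul_pow hs).tsum_le_tsum (fun n => ?_)
        ((summable_q_mul_rpow hs).mul_left _)
      rcases eq_or_ne n 0 with rfl | hn
      · simp [q]
      · have := mul_le_mul_of_nonneg_left (pow_floor_log_bounds hs hn).2 (q_nonneg n)
        linarith
    have h2 := mul_le_mul_of_nonneg_left hle (Real.exp_pos (-s)).le
    rw [← mul_assoc, ← Real.exp_add, neg_add_cancel, Real.exp_zero, one_mul] at h2
    linarith

/-- The constant in Mertens' second theorem is `γ`. By Abel's theorem, the limit of the partial sums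
of `block k - 1/(k+1)` is the limit of `∑ q(p) p^(-s) + log s` as `s → 0+`, which is `0`. -/
lemma limit_eq_gamma {l : ℝ} (h : Tendsto
    (fun z : ℝ => ∑ n ∈ range ⌈z⌉₊, q n - Real.log (Real.log z)) atTop (𝓝 l)) :
    l = Real.eulerMascheroniConstant := by
  have hpart : Tendsto (fun m : ℕ => ∑ k ∈ range m, (block k - 1 / ((k : ℝ) + 1))) atTop
      (𝓝 (l - Real.eulerMascheroniConstant)) := by
    have h1 := h.comp (Real.tendsto_exp_atTop.comp (tendsto_natCast_atTop_atTop (R := ℝ)))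
    refine (h1.sub Real.tendsto_harmonic_sub_log).congr fun m => ?_
    have hH : ∑ k ∈ range m, 1 / ((k : ℝ) + 1) = (harmonic m : ℝ) := by
      rw [harmonic]
      push_cast
      simp
    rw [sum_sub_distrib, sum_block, hH]
    simp only [Function.comp, Real.log_exp]
    ring
  have hx : Tendsto (fun s : ℝ => Real.exp (-s)) (𝓝[>] 0) (𝓝[<] 1) := by
    refine tendsto_nhdsWithin_of_tendsto_nhds_of_eventually_within _ ?_ ?_
    · have : Tendsto (fun s : ℝ => Real.exp (-s)) (𝓝 0) (𝓝 (Real.exp (-0))) :=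
        (Real.continuous_exp.comp continuous_neg).tendsto 0
      rw [neg_zero, Real.exp_zero] at this
      exact this.mono_left nhdsWithin_le_nhds
    · filter_upwards [self_mem_nhdsWithin] with s hs
      exact Real.exp_lt_one_iff.2 (neg_lt_zero.2 hs)
  have habel := (Real.tendsto_tsum_powerSeries_nhdsWithin_lt hpart).comp hx
  have hx1 : Tendsto (fun s : ℝ => Real.exp (-s)) (𝓝[>] 0) (𝓝 1) :=
    hx.mono_right nhdsWithin_le_nhds
  have hA := hx1.mul habel
  rw [one_mul] at hA
  have hB := (tendsto_exp_mul_tsum_sub.add tendsto_tsum_q_add_log).add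
    tendsto_log_one_sub_exp_sub_log
  rw [add_zero, add_zero] at hB
  have := tendsto_nhds_unique (hA.congr' ?_) hB
  · linarith
  filter_upwards [self_mem_nhdsWithin] with s hs
  have hlt : Real.exp (-s) < 1 := Real.exp_lt_one_iff.2 (neg_lt_zero.2 hs)
  have hlog := Real.hasSum_pow_div_log_of_abs_lt_one (x := Real.exp (-s))
    (by rwa [abs_of_pos (Real.exp_pos _)])
  have hsum := ((hasSum_block hs).mul_left (Real.exp (-s))).sub hlog
  have e : Real.exp (-s) * ∑' k : ℕ, (block k - 1 / ((k : ℝ) + 1)) * Real.exp (-s) ^ k =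
      Real.exp (-s) * ∑' n : ℕ, q n * Real.exp (-s) ^ ⌊Real.log n⌋₊ -
        -Real.log (1 - Real.exp (-s)) := by
    rw [← hsum.tsum_eq, ← tsum_mul_left]
    refine tsum_congr fun k => ?_
    ring
  simp only [Function.comp]
  rw [e]
  ring

/-! ### Mertens' third theorem and the comparison -/

/-- Mertens' third theorem. -/
lemma tendsto_mertens_product : Tendsto (fun z : ℝ =>
    Real.exp Real.eulerMascheroniConstant * Real.log z *
      ∏ p ∈ Nat.primesBelow ⌈z⌉₊, (1 - 1 / (p : ℝ))) atTop (𝓝 1) := by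
  obtain ⟨l, hl⟩ := exists_tendsto_sum_q_sub_loglog
  have h := tendsto_sum_ceil hl
  rw [limit_eq_gamma h] at h
  have h1 : Tendsto (fun z : ℝ => Real.exp (Real.eulerMascheroniConstant -
      (∑ n ∈ range ⌈z⌉₊, q n - Real.log (Real.log z)))) atTop (𝓝 1) := by
    have := (Real.continuous_exp.tendsto _).comp (h.const_sub Real.eulerMascheroniConstant)
    simpa [Function.comp_def] using this
  refine h1.congr' ?_
  filter_upwards [eventually_gt_atTop 1] with z hz
  have hprod : ∏ p ∈ Nat.primesBelow ⌈z⌉₊, (1 - 1 / (p : ℝ)) =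
      Real.exp (-∑ n ∈ range ⌈z⌉₊, q n) := by
    rw [← sum_neg_distrib, Real.exp_sum, Nat.primesBelow, prod_filter]
    refine prod_congr rfl fun p _ => ?_
    split_ifs with hp
    · have h2 : (2 : ℝ) ≤ p := by exact_mod_cast hp.two_le
      have : 1 / (p : ℝ) ≤ 1 / 2 := one_div_le_one_div_of_le (by norm_num) h2
      rw [q, if_pos hp, neg_neg, Real.exp_log (by linarith)]
    · simp [q, hp]
  rw [hprod, sub_sub_eq_add_sub, sub_eq_add_neg, Real.exp_add, Real.exp_add,
    Real.exp_log (Real.log_pos hz)]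

/-- Modulo a prime `p`, the solutions of `a H(a) = 0` are `0` together with the nonzero roots
of `H`. -/
lemma rho2_eq_rho1_add_one (H : Polynomial ℤ) {p : ℕ} (hp : p.Prime) :
    rho2 H p = rho1 H p + 1 := by
  have : Fact p.Prime := ⟨hp⟩
  have e : {a : ZMod p | a * Polynomial.aeval a H = 0} =
      insert 0 {a : ZMod p | IsUnit a ∧ Polynomial.aeval a H = 0} := by
    ext a
    by_cases ha : a = 0 <;> simp [ha]
  have h1 : rho1 H p = Set.ncard {a : ZMod p | IsUnit a ∧ Polynomial.aeval a H = 0} := rfl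
  have h2 : rho2 H p = Set.ncard {a : ZMod p | a * Polynomial.aeval a H = 0} := rfl
  rw [h1, h2, e, Set.ncard_insert_of_notMem (by simp) (Set.toFinite _)]

end MertensThird

/-- Mertens-type comparison,
`e^γ · log z · ∏_{p<z}(1 - ρ₂(p)/p) / ∏_{p<z}(1 - ρ₁(p)/(p-1)) → 1` as `z → ∞`. -/
theorem mertens_comparison (H : Polynomial ℤ)
    (hρ : ∀ p : ℕ, p.Prime → rho1 H p < p - 1) :
    Filter.Tendsto (fun z : ℝ =>
      Real.exp Real.eulerMascheroniConstant * Real.log z *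
        (∏ p ∈ Nat.primesBelow ⌈z⌉₊, (1 - (rho2 H p : ℝ) / p)) /
        (∏ p ∈ Nat.primesBelow ⌈z⌉₊, (1 - (rho1 H p : ℝ) / ((p : ℝ) - 1))))
      Filter.atTop (nhds 1) := by
  refine MertensThird.tendsto_mertens_product.congr fun z => ?_
  rw [mul_div_assoc, ← Finset.prod_div_distrib]
  congr 1
  refine Finset.prod_congr rfl fun p hp => ?_
  have hpp : p.Prime := Nat.prime_of_mem_primesBelow hp
  have hr : (rho1 H p : ℝ) < (p : ℝ) - 1 := by
    have h : rho1 H p + 1 < p := by have := hρ p hpp; lia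
    have : ((rho1 H p + 1 : ℕ) : ℝ) < p := by exact_mod_cast h
    push_cast at this
    linarith
  have hp2 : (2 : ℝ) ≤ p := by exact_mod_cast hpp.two_le
  have h1 : (p : ℝ) - 1 ≠ 0 := by linarith
  have h2 : (p : ℝ) - 1 - rho1 H p ≠ 0 := by linarith
  have h0 : (p : ℝ) ≠ 0 := by linarith
  rw [MertensThird.rho2_eq_rho1_add_one H hpp, one_sub_div h1, one_sub_div h0, one_sub_div h0]
  push_cast
  rw [← sub_sub, sub_right_comm]
  field_simp
end

section
/- Let g ≥ 1 be an integer, β > 0, and let F, f : ℝ → ℝ with F differentiable, nonincreasing, and satisfying F(t) ≥ 1 on (0,∞), f nondecreasing with f(t) ≤ 1 on (0,∞) and differentiable on [β,∞), satisfying d/dt(t^{g+1}·f(t)) = (g+1)·t^{g}·F(t−1) for all t ≥ β. Let u, w, v, τ₂ be reals with 0 < u < w < v and 1/u < τ₂, set ξ₂ = v·τ₂ + 1 − v/u, and assume ξ₂ ≥ β. Then g·∫_u^w (1 − u/s)·F(v·(τ₂ − 1/s))·ds/s ≤ (g/(g+1))·(u/v)·ξ₂·(1 − f(ξ₂))·log(v/u)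 + g·(log(w/u) − 1 + u/w). -/
/-!
Write `P s = F (v (τ₂ - 1/s)) - 1`, which is nonnegative, continuous and antitone on `[u, v]`.

* The constant part `1` of `F` contributes `∫_u^w (1 - u/s)/s ds = log (w/u) - 1 + u/w`.
* In the contribution of `P`, the integrand is nonnegative, so the range may be extended from `[u, w]`
  to `[u, v]`. There `s - u` increases while `P` decreases, and a Chebyshev-type inequality gives
  `∫_u^v (s - u) P/s² ≤ u log (v/u) ∫_u^v P/s²` (`chebyshev_bound`). The factor `u log (v/u)` exceeds
  the mean of `s - u` with respect to `ds/s²` because `1 + log (v/u) ≤ v/u`.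
* With `t(s) = v (τ₂ - 1/s) + 1`, the differential-delay equation says that
  `t ^ (g+1) (1 - f t)` has derivative `-(g+1) t^g (F (t-1) - 1)`. Integrating over `[u, v]`, using
  `t(s) ≥ t(u) = ξ₂` and dropping the nonnegative end value at `s = v`, yields
  `∫_u^v P/s² ≤ ξ₂ (1 - f ξ₂) / ((g+1) v)` (`mass_bound`).
-/

open Set intervalIntegral in
lemma integral_main_term {u w : ℝ} (hu : 0 < u) (huw : u < w) :
    ∫ s in u..w, (s - u) / s ^ 2 = Real.log (w / u) - 1 + u / w := by
  have hpos : ∀ s ∈ uIcc u w, 0 < s := fun s hs => by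
    rw [uIcc_of_le huw.le] at hs; linarith [hs.1]
  have hw : 0 < w := hu.trans huw
  rw [integral_eq_sub_of_hasDerivAt (f := fun s => Real.log s + u * s⁻¹)]
  · rw [Real.log_div hw.ne' hu.ne']
    field_simp
    ring
  · intro s hs
    have h := hpos s hs
    exact ((Real.hasDerivAt_log h.ne').add ((hasDerivAt_inv h.ne').const_mul u)).congr_deriv
      (by field_simp; ring)
  · apply ContinuousOn.intervalIntegrable
    apply ContinuousOn.div (by fun_prop) (by fun_prop)
    intro s hs
    have := hpos s hs
    positivity

open Set intervalIntegral in
/-- A Chebyshev-type inequality for the weight `ds/s²`. The proof compares `P` with its value at the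
threshold `c = u (1 + log (v/u))`, at which `s - c` changes sign. -/
lemma chebyshev_bound {u v : ℝ} (hu : 0 < u) (huv : u < v) {P : ℝ → ℝ}
    (hcont : ContinuousOn P (Icc u v)) (hanti : AntitoneOn P (Icc u v))
    (hP : ∀ s ∈ Icc u v, 0 ≤ P s) :
    ∫ s in u..v, (s - u) / s ^ 2 * P s ≤ u * Real.log (v / u) * ∫ s in u..v, P s / s ^ 2 := by
  have hv : 0 < v := hu.trans huv
  have hpos : ∀ s ∈ Icc u v, 0 < s := fun s hs => by linarith [hs.1]
  set L := Real.log (v / u) with hL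
  have hL0 : 0 ≤ L := Real.log_nonneg (by rw [le_div_iff₀ hu]; linarith)
  have hL1 : u * (1 + L) ≤ v := by
    have h := Real.log_le_sub_one_of_pos (div_pos hv hu)
    rw [← hL, le_sub_iff_add_le, le_div_iff₀ hu] at h
    linarith
  have hsq : ∀ s ∈ Icc u v, s ^ 2 ≠ 0 := fun s hs => (pow_pos (hpos s hs) 2).ne'
  have hc : u * (1 + L) ∈ Icc u v := ⟨by nlinarith, hL1⟩
  have hint : ∀ {φ : ℝ → ℝ}, ContinuousOn φ (Icc u v) →
      IntervalIntegrable φ MeasureTheory.volume u v := fun h =>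
    ContinuousOn.intervalIntegrable (by rwa [uIcc_of_le huv.le])
  have i1 := hint (φ := fun s => (s - u) / s ^ 2 * P s)
    ((ContinuousOn.div (by fun_prop) (by fun_prop) hsq).mul hcont)
  have i2 := hint (φ := fun s => P s / s ^ 2) (ContinuousOn.div hcont (by fun_prop) hsq)
  have i3 := hint (φ := fun s => (s - u * (1 + L)) / s ^ 2)
    (ContinuousOn.div (by fun_prop) (by fun_prop) hsq)
  have key : ∫ s in u..v, ((s - u) / s ^ 2 * P s - u * L * (P s / s ^ 2)) ≤
      ∫ s in u..v, P (u * (1 + L)) * ((s - u * (1 + L)) / s ^ 2) := by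
    apply integral_mono_on huv.le (i1.sub (i2.const_mul _)) (i3.const_mul _)
    intro s hs
    have h := hpos s hs
    have h2 : (s - u * (1 + L)) * (P s - P (u * (1 + L))) ≤ 0 := by
      rcases le_total s (u * (1 + L)) with h' | h'
      · have := hanti hs hc h'
        nlinarith
      · have := hanti hc hs h'
        nlinarith
    have e : (s - u) / s ^ 2 * P s - u * L * (P s / s ^ 2) -
        P (u * (1 + L)) * ((s - u * (1 + L)) / s ^ 2) =
        (s - u * (1 + L)) * (P s - P (u * (1 + L))) / s ^ 2 := by ring
    have := div_nonpos_of_nonpos_of_nonneg h2 (sq_nonneg s)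
    linarith
  rw [integral_sub i1 (i2.const_mul _), integral_const_mul, integral_const_mul] at key
  have hval : ∫ s in u..v, (s - u * (1 + L)) / s ^ 2 ≤ 0 := by
    rw [integral_eq_sub_of_hasDerivAt (f := fun s => Real.log s + u * (1 + L) * s⁻¹) _ i3]
    · have e : Real.log v + u * (1 + L) * v⁻¹ - (Real.log u + u * (1 + L) * u⁻¹) =
          (u * (1 + L) - v) / v := by
        rw [hL, Real.log_div hv.ne' hu.ne']
        field_simp
        ring
      rw [e]
      exact div_nonpos_of_nonpos_of_nonneg (by linarith) hv.le
    · intro s hs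
      rw [uIcc_of_le huv.le] at hs
      have h := hpos s hs
      exact ((Real.hasDerivAt_log h.ne').add
        ((hasDerivAt_inv h.ne').const_mul (u * (1 + L)))).congr_deriv (by field_simp; ring)
  have := mul_nonpos_of_nonneg_of_nonpos (hP _ hc) hval
  linarith

open Set intervalIntegral in
/-- Integrating the differential-delay equation along `t(s) = v (τ - 1/s) + 1` bounds the total mass
of `F - 1` against `ds/s²`. -/
lemma mass_bound (g : ℕ) {β : ℝ} {F f : ℝ → ℝ}
    (hFone : ∀ t ∈ Ioi (0 : ℝ), 1 ≤ F t) (hfone : ∀ t ∈ Ioi (0 : ℝ), f t ≤ 1)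
    (hderiv : ∀ t : ℝ, β ≤ t →
      HasDerivAt (fun s => s ^ (g + 1) * f s) (((g : ℝ) + 1) * t ^ g * F (t - 1)) t)
    {u v τ ξ : ℝ} (hu : 0 < u) (huv : u < v) (hτ : 1 / u < τ)
    (hξ : ξ = v * τ + 1 - v / u) (hξβ : β ≤ ξ)
    (hcont : ContinuousOn (fun s => F (v * (τ - 1 / s))) (Icc u v)) :
    ∫ s in u..v, (F (v * (τ - 1 / s)) - 1) / s ^ 2 ≤ ξ * (1 - f ξ) / (((g : ℝ) + 1) * v) := by
  have hv : 0 < v := hu.trans huv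
  have hpos : ∀ s ∈ Icc u v, 0 < s := fun s hs => by linarith [hs.1]
  have hξ0 : 0 < ξ := by
    have := mul_lt_mul_of_pos_left hτ hv
    rw [mul_one_div] at this
    linarith
  have hq : ∀ s ∈ Icc u v, 0 < v * (τ - 1 / s) := fun s hs => by
    have := one_div_le_one_div_of_le hu hs.1
    exact mul_pos hv (by linarith)
  have ht : ∀ s ∈ Icc u v, ξ ≤ v * (τ - 1 / s) + 1 := fun s hs => by
    have := mul_le_mul_of_nonneg_left (one_div_le_one_div_of_le hu hs.1) hv.le
    rw [mul_one_div v u] at this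
    linarith
  set G : ℝ → ℝ := fun t => t ^ (g + 1) - t ^ (g + 1) * f t with hG
  have hGd : ∀ s ∈ Icc u v, HasDerivAt (fun s => G (v * (τ - 1 / s) + 1))
      (-(((g : ℝ) + 1) * v * ((v * (τ - 1 / s) + 1) ^ g * ((F (v * (τ - 1 / s)) - 1) / s ^ 2))))
      s := fun s hs => by
    have h := hpos s hs
    have h1 := hderiv _ (hξβ.trans (ht s hs))
    have h2 := (hasDerivAt_pow (g + 1) (v * (τ - 1 / s) + 1)).sub h1
    have h3 : HasDerivAt (fun s : ℝ => v * (τ - 1 / s) + 1) (v / s ^ 2) s := by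
      simp only [one_div]
      exact ((((hasDerivAt_inv h.ne').const_sub τ).const_mul v).add_const 1).congr_deriv
        (by field_simp)
    refine (HasDerivAt.comp s h2 h3).congr_deriv ?_
    simp only [add_sub_cancel_right, Nat.add_sub_cancel]
    push_cast
    field_simp
    ring
  have hsq : ∀ s ∈ Icc u v, s ^ 2 ≠ 0 := fun s hs => (pow_pos (hpos s hs) 2).ne'
  have hint : ∀ {φ : ℝ → ℝ}, ContinuousOn φ (Icc u v) →
      IntervalIntegrable φ MeasureTheory.volume u v := fun h =>
    ContinuousOn.intervalIntegrable (by rwa [uIcc_of_le huv.le])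
  have hc1 : ContinuousOn (fun s => (F (v * (τ - 1 / s)) - 1) / s ^ 2) (Icc u v) :=
    ContinuousOn.div (hcont.sub continuousOn_const) (by fun_prop) hsq
  have hc2 : ContinuousOn (fun s : ℝ => (v * (τ - 1 / s) + 1) ^ g) (Icc u v) := by
    have : ContinuousOn (fun s : ℝ => 1 / s) (Icc u v) :=
      ContinuousOn.div (by fun_prop) (by fun_prop) fun s hs => (hpos s hs).ne'
    fun_prop
  have i2 := hint (hc2.mul hc1)
  have hftc := integral_eq_sub_of_hasDerivAt (a := u) (b := v)
    (fun s hs => hGd s (by rwa [uIcc_of_le huv.le] at hs)) ((i2.const_mul _).neg)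
  rw [integral_neg, integral_const_mul] at hftc
  have hmono : ∫ s in u..v, ξ ^ g * ((F (v * (τ - 1 / s)) - 1) / s ^ 2) ≤
      ∫ s in u..v, (v * (τ - 1 / s) + 1) ^ g * ((F (v * (τ - 1 / s)) - 1) / s ^ 2) := by
    apply integral_mono_on huv.le ((hint hc1).const_mul _) i2
    intro s hs
    have h1 := hFone _ (hq s hs)
    exact mul_le_mul_of_nonneg_right (pow_le_pow_left₀ hξ0.le (ht s hs) g)
      (div_nonneg (by linarith) (sq_nonneg s))
  rw [integral_const_mul] at hmono
  have hend : 0 ≤ G (v * (τ - 1 / v) + 1) := by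
    have hp : 0 < v * (τ - 1 / v) + 1 := by
      have := hq v ⟨huv.le, le_rfl⟩
      linarith
    have h1 := hfone _ hp
    have : G (v * (τ - 1 / v) + 1) =
      (v * (τ - 1 / v) + 1) ^ (g + 1) * (1 - f (v * (τ - 1 / v) + 1)) := by simp only [hG]; ring
    rw [this]
    exact mul_nonneg (pow_nonneg hp.le _) (by linarith)
  have hstart : v * (τ - 1 / u) + 1 = ξ := by rw [hξ]; ring
  simp only [hstart] at hftc
  have hGξ : G ξ = ξ ^ g * (ξ * (1 - f ξ)) := by simp only [hG]; ring
  rw [hGξ] at hftc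
  have hgv : 0 < ((g : ℝ) + 1) * v := by positivity
  rw [le_div_iff₀ hgv]
  have hm := mul_le_mul_of_nonneg_left hmono hgv.le
  apply le_of_mul_le_mul_left _ (pow_pos hξ0 g)
  linarith


/-- the upper bound for the integral `J` (Lemma 7.2). -/
theorem integral_J_bound (g : ℕ) (hg : 1 ≤ g) (β : ℝ) (hβ : 0 < β)
    (F f : ℝ → ℝ)
    (hFdiff : DifferentiableOn ℝ F (Set.Ioi 0))
    (hFanti : AntitoneOn F (Set.Ioi 0))
    (hFone : ∀ t ∈ Set.Ioi (0 : ℝ), 1 ≤ F t)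
    (hfmono : MonotoneOn f (Set.Ioi 0))
    (hfone : ∀ t ∈ Set.Ioi (0 : ℝ), f t ≤ 1)
    (hderiv : ∀ t : ℝ, β ≤ t →
      HasDerivAt (fun s => s ^ (g + 1) * f s) (((g : ℝ) + 1) * t ^ g * F (t - 1)) t)
    (u w v τ₂ : ℝ) (hu : 0 < u) (huw : u < w) (hwv : w < v) (hτ : 1 / u < τ₂)
    (ξ₂ : ℝ) (hξ : ξ₂ = v * τ₂ + 1 - v / u) (hξβ : β ≤ ξ₂) :
    (g : ℝ) * ∫ s in u..w, (1 - u / s) * F (v * (τ₂ - 1 / s)) / s ≤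
      ((g : ℝ) / ((g : ℝ) + 1)) * (u / v) * ξ₂ * (1 - f ξ₂) * Real.log (v / u)
        + (g : ℝ) * (Real.log (w / u) - 1 + u / w) := by
  have hwu : 0 < w := hu.trans huw
  have huv : u < v := huw.trans hwv
  have hv : 0 < v := hu.trans huv
  have hpos : ∀ s ∈ Set.Icc u v, 0 < s := fun s hs => by linarith [hs.1]
  have hq : ∀ s ∈ Set.Icc u v, v * (τ₂ - 1 / s) ∈ Set.Ioi (0 : ℝ) := fun s hs => by
    have := one_div_le_one_div_of_le hu hs.1
    exact mul_pos hv (by linarith)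
  have hcont : ContinuousOn (fun s => F (v * (τ₂ - 1 / s))) (Set.Icc u v) := by
    refine hFdiff.continuousOn.comp ?_ hq
    have : ContinuousOn (fun s : ℝ => 1 / s) (Set.Icc u v) :=
      ContinuousOn.div (by fun_prop) (by fun_prop) fun s hs => (hpos s hs).ne'
    fun_prop
  set P : ℝ → ℝ := fun s => F (v * (τ₂ - 1 / s)) - 1 with hP
  have hPcont : ContinuousOn P (Set.Icc u v) := hcont.sub continuousOn_const
  have hPanti : AntitoneOn P (Set.Icc u v) := fun a ha b hb hab => by
    have h1 := one_div_le_one_div_of_le (hpos a ha) hab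
    have h2 := hFanti (hq a ha) (hq b hb) (mul_le_mul_of_nonneg_left (by linarith) hv.le)
    simp only [hP]
    linarith
  have hP0 : ∀ s ∈ Set.Icc u v, 0 ≤ P s := fun s hs => by
    have := hFone _ (hq s hs)
    simp only [hP]
    linarith
  have hcheb := chebyshev_bound hu huv hPcont hPanti hP0
  have hmass := mass_bound g hFone hfone hderiv hu huv hτ hξ hξβ hcont
  have hsq : ∀ s ∈ Set.Icc u v, s ^ 2 ≠ 0 := fun s hs => (pow_pos (hpos s hs) 2).ne'
  have hc1 : ContinuousOn (fun s : ℝ => (s - u) / s ^ 2) (Set.Icc u v) :=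
    ContinuousOn.div (by fun_prop) (by fun_prop) hsq
  have hsub : Set.uIcc u w ⊆ Set.Icc u v := by
    rw [Set.uIcc_of_le huw.le]
    exact Set.Icc_subset_Icc_right hwv.le
  have hext : ∫ s in u..w, (s - u) / s ^ 2 * P s ≤ ∫ s in u..v, (s - u) / s ^ 2 * P s := by
    apply intervalIntegral.integral_mono_interval le_rfl huw.le hwv.le
    · filter_upwards [MeasureTheory.ae_restrict_mem measurableSet_Ioc] with s hs
      exact mul_nonneg (div_nonneg (by linarith [hs.1]) (sq_nonneg s)) (hP0 s ⟨hs.1.le, hs.2⟩)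
    · apply ContinuousOn.intervalIntegrable
      rw [Set.uIcc_of_le huv.le]
      exact hc1.mul hPcont
  have i1 : IntervalIntegrable (fun s => (s - u) / s ^ 2) MeasureTheory.volume u w :=
    (hc1.mono hsub).intervalIntegrable
  have i2 : IntervalIntegrable (fun s => (s - u) / s ^ 2 * P s) MeasureTheory.volume u w :=
    ((hc1.mul hPcont).mono hsub).intervalIntegrable
  have hsplit : ∫ s in u..w, (1 - u / s) * F (v * (τ₂ - 1 / s)) / s =
      (∫ s in u..w, (s - u) / s ^ 2) + ∫ s in u..w, (s - u) / s ^ 2 * P s := by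
    rw [← intervalIntegral.integral_add i1 i2]
    apply intervalIntegral.integral_congr
    intro s hs
    have h := hpos s (hsub hs)
    simp only [hP]
    field_simp
    ring
  have hL0 : 0 ≤ Real.log (v / u) := Real.log_nonneg (by rw [le_div_iff₀ hu]; linarith)
  have hJ := (hext.trans hcheb).trans (mul_le_mul_of_nonneg_left hmass (mul_nonneg hu.le hL0))
  rw [hsplit, integral_main_term hu huw, mul_add, add_comm]
  have e : ((g : ℝ) / ((g : ℝ) + 1)) * (u / v) * ξ₂ * (1 - f ξ₂) * Real.log (v / u) =
      g * (u * Real.log (v / u) * (ξ₂ * (1 - f ξ₂) / (((g : ℝ) + 1) * v))) := by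
    field_simp
  rw [e]
  have := mul_le_mul_of_nonneg_left hJ (Nat.cast_nonneg (α := ℝ) g)
  linarith
end
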